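/- Let r > 0 be a real number, q ∈ (0,1), c > 0, and define p_t(x,z) as the transition kernel p_Θ with parameter Θ = Θ_t = (1-q)/(e^{ct}-q). Then for every natural number i, p_t(i, i+1)/t → c·q·(i+r)/(1-q) as t → 0⁺; that is, the infinitesimal birth rate from state i is λ_i = cq(i+r)/(1-q). -/

import Mathlib

open Filter Topology

/-- Transition kernel p_Θ(x, z) = ∑_{y=0}^{min(x,z)}
    Γ(z+r)/((z-y)! Γ(y+r)) · [q(1-Θ)]^{z-y} · [1-q(1-Θ)]^{r+y} · C(x,y) Θ^y (1-Θ)^{x-y}. -/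
noncomputable def pKer (r q Θ : ℝ) (x z : ℕ) : ℝ :=
  ∑ y ∈ Finset.range (min x z + 1),
    Real.Gamma ((z : ℝ) + r) / (((z - y).factorial : ℝ) * Real.Gamma ((y : ℝ) + r)) *
      (q * (1 - Θ)) ^ (z - y) * (1 - q * (1 - Θ)) ^ (r + (y : ℝ)) *
      (x.choose y : ℝ) * Θ ^ y * (1 - Θ) ^ (x - y)

/-! An upward jump of size `k` carries a factor `(1 - Θ) ^ k`, and the remaining factor is
differentiable at `Θ = 1`, where only the summand `y = x` survives. For `k = 1` this shows that
`Θ ↦ p_Θ(x, x + 1)` vanishes at `Θ = 1` with derivative `-q (x + r)`. Since `Θ_t` passes through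
`1` at `t = 0` with derivative `-c / (1 - q)`, the birth rate follows from the chain rule. -/

/-- The cofactor of `(1 - Θ) ^ k` in the probability `pKer r q Θ x (x + k)` of an upward jump
of size `k`. In each summand the powers `x + k - y` and `x - y` of `1 - Θ` have been merged, which
leaves `2 * (x - y)` once `(1 - Θ) ^ k` is taken out. -/
noncomputable def upJumpCofactor (r q : ℝ) (x k : ℕ) (Θ : ℝ) : ℝ :=
  ∑ y ∈ Finset.range (x + 1),
    Real.Gamma ((x : ℝ) + k + r) / (((x + k - y).factorial : ℝ) * Real.Gamma ((y : ℝ) + r)) *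
      q ^ (x + k - y) * (1 - q * (1 - Θ)) ^ (r + (y : ℝ)) *
      (x.choose y : ℝ) * Θ ^ y * (1 - Θ) ^ (2 * (x - y))

/-- The time-dependent dependence parameter `Θ_t` of the kernel. -/
noncomputable def dependenceParam (q c t : ℝ) : ℝ :=
  (1 - q) / (Real.exp (c * t) - q)

theorem pKer_add_right (r q Θ : ℝ) (x k : ℕ) :
    pKer r q Θ x (x + k) = (1 - Θ) ^ k * upJumpCofactor r q x k Θ := by
  rw [pKer, upJumpCofactor, min_eq_left (Nat.le_add_right x k), Finset.mul_sum]
  refine Finset.sum_congr rfl fun y hy => ?_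
  have hyx : y ≤ x := Finset.mem_range_succ_iff.mp hy
  rw [mul_pow, Nat.sub_add_comm hyx]
  push_cast
  ring

theorem differentiableAt_upJumpCofactor_one (r q : ℝ) (x k : ℕ) :
    DifferentiableAt ℝ (upJumpCofactor r q x k) 1 := by
  have h_base : 1 - q * (1 - (1 : ℝ)) ≠ 0 := by simp
  unfold upJumpCofactor
  fun_prop (disch := exact h_base)

theorem upJumpCofactor_apply_one (r q : ℝ) (x k : ℕ) :
    upJumpCofactor r q x k 1 =
      Real.Gamma (x + k + r) / (k.factorial * Real.Gamma (x + r)) * q ^ k := by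
  rw [upJumpCofactor, Finset.sum_eq_single_of_mem x (Finset.self_mem_range_succ x)]
  · simp
  · intro y hy hyx
    have hxy : x - y ≠ 0 :=
      Nat.sub_ne_zero_of_lt ((Finset.mem_range_succ_iff.mp hy).lt_of_ne hyx)
    simp [hxy]

theorem upJumpCofactor_one_apply_one {r : ℝ} {x : ℕ} (hxr : ∀ m : ℕ, (x : ℝ) + r ≠ -m) (q : ℝ) :
    upJumpCofactor r q x 1 1 = q * (x + r) := by
  have hΓ : Real.Gamma (x + (1 : ℕ) + r) = (x + r) * Real.Gamma (x + r) := by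
    rw [Nat.cast_one, add_right_comm, Real.Gamma_add_one (by simpa using hxr 0)]
  rw [upJumpCofactor_apply_one, hΓ, Nat.factorial_one, Nat.cast_one, one_mul, pow_one,
    mul_div_cancel_right₀ _ (Real.Gamma_ne_zero hxr), mul_comm]

theorem pKer_one_succ (r q : ℝ) (x : ℕ) : pKer r q 1 x (x + 1) = 0 := by
  simp [pKer_add_right]

theorem hasDerivAt_pKer_succ {r : ℝ} {x : ℕ} (hxr : ∀ m : ℕ, (x : ℝ) + r ≠ -m) (q : ℝ) :
    HasDerivAt (fun Θ => pKer r q Θ x (x + 1)) (-(q * (x + r))) 1 := by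
  simp only [pKer_add_right, pow_one]
  have h := ((hasDerivAt_id' (1 : ℝ)).const_sub 1).fun_mul
    (differentiableAt_upJumpCofactor_one r q x 1).hasDerivAt
  simpa [upJumpCofactor_one_apply_one hxr] using h

theorem dependenceParam_zero {q : ℝ} (hq : q ≠ 1) (c : ℝ) : dependenceParam q c 0 = 1 := by
  simp [dependenceParam, div_self (sub_ne_zero.mpr hq.symm)]

theorem hasDerivAt_dependenceParam_zero {q : ℝ} (hq : q ≠ 1) (c : ℝ) :
    HasDerivAt (dependenceParam q c) (-(c / (1 - q))) 0 := by
  have hq' : 1 - q ≠ 0 := sub_ne_zero.mpr hq.symm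
  have h_denom : HasDerivAt (fun t => Real.exp (c * t) - q) c 0 := by
    simpa using ((hasDerivAt_id' (0 : ℝ)).const_mul c).exp.sub_const q
  have h_div := (hasDerivAt_const (0 : ℝ) (1 - q)).div h_denom (by simpa using hq')
  refine h_div.congr_deriv ?_
  simp only [mul_zero, Real.exp_zero]
  field_simp
  ring

theorem pKer_birth_rate_general {r q : ℝ} {i : ℕ} (hir : ∀ m : ℕ, (i : ℝ) + r ≠ -m)
    (hq : q ≠ 1) (c : ℝ) :
    Tendsto (fun t : ℝ => pKer r q ((1 - q) / (Real.exp (c * t) - q)) i (i + 1) / t)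
      (𝓝[≠] (0 : ℝ)) (𝓝 (c * q * ((i : ℝ) + r) / (1 - q))) := by
  have h_chain : HasDerivAt (fun t => pKer r q (dependenceParam q c t) i (i + 1))
      (-(q * (i + r)) * -(c / (1 - q))) 0 :=
    (hasDerivAt_pKer_succ hir q).comp_of_eq 0 (hasDerivAt_dependenceParam_zero hq c)
      (dependenceParam_zero hq c).symm
  have h_slope := h_chain.tendsto_slope_zero
  simp only [zero_add, dependenceParam_zero hq, pKer_one_succ, sub_zero, smul_eq_mul] at h_slope
  convert h_slope using 2
  · exact div_eq_inv_mul _ _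
  · ring

/-- Infinitesimal birth rate: with Θ_t = (1-q)/(e^{ct}-q),
    p_t(i, i+1)/t → c·q·(i+r)/(1-q) as t → 0⁺. -/
theorem pKer_birth_rate
    (r q c : ℝ) (hr : 0 < r) (hq : q ∈ Set.Ioo (0 : ℝ) 1) (hc : 0 < c)
    (i : ℕ) :
    Tendsto (fun t : ℝ => pKer r q ((1 - q) / (Real.exp (c * t) - q)) i (i + 1) / t)
      (𝓝[>] (0 : ℝ)) (𝓝 (c * q * ((i : ℝ) + r) / (1 - q))) := by
  have hir (m : ℕ) : (i : ℝ) + r ≠ -m :=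
    ((neg_nonpos.mpr m.cast_nonneg).trans_lt (by positivity)).ne'
  exact (pKer_birth_rate_general hir hq.2.ne c).mono_left (nhdsGT_le_nhdsNE 0)
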